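/- Let Σ be a real symmetric positive definite d×d matrix, T, β > 0, K := I + TΣ⁻¹. Suppose A : ℝ → (d×d real symmetric positive definite matrices) is differentiable, that S(t) := K·A(t)·K − 2βT·K is positive definite for all t, and that A satisfies the matrix ODE A'(t) = −β·K⁻¹[ ((βΣ)⁻¹ − A(t)⁻¹)·S(t) + S(t)·((βΣ)⁻¹ − A(t)⁻¹) ]·K⁻¹. Then the function L(t) := Tr( ((βΣ)⁻¹ − A(t)⁻¹)² ) (the squared Frobenius norm of (βΣ)⁻¹ − A(t)⁻¹) satisfies L'(t) < 0 at every t for which A(t) ≠ βΣ; i.e., the squared Frobenius norm is a strict Lyapunov function for the continuous-time limit of the BRWP covariance dynamics. -/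

import Mathlib

open Matrix Finset in
theorem core_cubic {d : ℕ} (n : Fin d → ℝ) (Y : Matrix (Fin d) (Fin d) ℝ) (hY : ∀ i j, Y i j = Y j i) :
    ∑ c, ∑ a, ∑ b, ((1 - n c ^ 2) * (1 + n a) * n b
      - (n c - n c * (1 + n c) * (n a + n b) / 2 + (2 - n c ^ 2) * n a * n b))
        * (Y c a * Y a b * Y b c) = 0 := by
  set f : Fin d → Fin d → Fin d → ℝ := fun c a b => ((1 - n c ^ 2) * (1 + n a) * n b
      - (n c - n c * (1 + n c) * (n a + n b) / 2 + (2 - n c ^ 2) * n a * n b))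
        * (Y c a * Y a b * Y b c) with hf
  change ∑ c, ∑ a, ∑ b, f c a b = 0
  have s1 : ∑ c, ∑ a, ∑ b, f c a b = ∑ c, ∑ a, ∑ b, f c b a := by
    refine Finset.sum_congr rfl fun c _ => Finset.sum_comm
  have s2 : ∀ g : Fin d → Fin d → Fin d → ℝ,
      ∑ c, ∑ a, ∑ b, g c a b = ∑ c, ∑ a, ∑ b, g a c b := fun g => Finset.sum_comm
  have s1' : ∀ g : Fin d → Fin d → Fin d → ℝ,
      ∑ c, ∑ a, ∑ b, g c a b = ∑ c, ∑ a, ∑ b, g c b a := fun g =>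
    Finset.sum_congr rfl fun c _ => Finset.sum_comm
  have e2 := s2 f
  have e3 := s2 (fun c a b => f c b a)
  have e4 := s1' (fun c a b => f a c b)
  have e5 := s1' (fun c a b => f a b c)
  have key : ∑ c, ∑ a, ∑ b, (f c a b + f c b a + f a c b + f a b c + f b c a + f b a c) = 0 := by
    refine Finset.sum_eq_zero fun c _ => Finset.sum_eq_zero fun a _ => Finset.sum_eq_zero fun b _ => ?_
    simp only [hf]
    rw [hY a c, hY b a, hY c b]
    ring
  simp only [Finset.sum_add_distrib] at key
  linarith

theorem rho_pos (a c : ℝ) (ha : 0 < a) (ha1 : a < 1) (hc : 0 < c) (hc1 : c < 1) :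
    0 < ((1 - c ^ 2) * (1 + a) * a + (1 - a) ^ 2 * (a - c) / (1 + a))
      + ((1 - a ^ 2) * (1 + c) * c + (1 - c) ^ 2 * (c - a) / (1 + c)) := by
  wlog h : c ≤ a with H
  · have := H c a hc hc1 ha ha1 (le_of_not_ge h)
    linarith
  have e : ((1 - c ^ 2) * (1 + a) * a + (1 - a) ^ 2 * (a - c) / (1 + a))
      + ((1 - a ^ 2) * (1 + c) * c + (1 - c) ^ 2 * (c - a) / (1 + c))
      = (((1 + a) * (1 + c)) ^ 2 * (a + c - 2 * a * c)
        - (a - c) ^ 2 * (4 - (1 + a) * (1 + c))) / ((1 + a) * (1 + c)) := by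
    field_simp
    ring
  rw [e]
  apply div_pos _ (by positivity)
  have g1 : 1 + a ≤ (1 + a) * (1 + c) := by nlinarith
  set g := (1 + a) * (1 + c) with hg
  have h1 : a - c < a + c - 2 * a * c := by nlinarith
  have h2 : (a - c) * (4 - g) ≤ g ^ 2 := by
    have : (a - c) * (4 - g) ≤ a * (3 - a) := by
      apply mul_le_mul <;> nlinarith
    nlinarith
  have h3 : (a - c) ^ 2 * (4 - g) ≤ g ^ 2 * (a - c) := by nlinarith
  have h4 : 0 < g ^ 2 * ((a + c - 2 * a * c) - (a - c)) := by
    apply mul_pos _ (by linarith)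
    nlinarith
  nlinarith

theorem quad_nonneg {d : ℕ} (U : Matrix (Fin d) (Fin d) ℝ) (hU : U.PosSemidef) (x : Fin d → ℝ) :
    0 ≤ ∑ a, ∑ b, x a * U a b * x b := by
  have := hU.dotProduct_mulVec_nonneg x
  simpa [dotProduct, Matrix.mulVec, Finset.mul_sum, mul_assoc] using this

theorem form_nonneg {d : ℕ} (U : Matrix (Fin d) (Fin d) ℝ) (hU : U.PosSemidef)
    (x n : Fin d → ℝ) (c : ℝ) (hc : 0 < c) (hc1 : c < 1) :
    0 ≤ ∑ a, ∑ b, (c - c * (1 + c) * (n a + n b) / 2 + (2 - c ^ 2) * n a * n b)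
      * (x a * U a b * x b) := by
  have h1 := quad_nonneg U hU (fun a => x a * (1 - (1 + c) * n a / 2))
  have h2 := quad_nonneg U hU (fun a => x a * n a)
  have hk : 0 ≤ 2 - c ^ 2 - c * (1 + c) ^ 2 / 4 := by nlinarith [mul_pos hc hc, mul_pos hc (mul_pos hc hc)]
  have : ∑ a, ∑ b, (c - c * (1 + c) * (n a + n b) / 2 + (2 - c ^ 2) * n a * n b)
      * (x a * U a b * x b) =
      c * (∑ a, ∑ b, (x a * (1 - (1 + c) * n a / 2)) * U a b * (x b * (1 - (1 + c) * n b / 2)))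
      + (2 - c ^ 2 - c * (1 + c) ^ 2 / 4) * ∑ a, ∑ b, (x a * n a) * U a b * (x b * n b) := by
    simp only [Finset.mul_sum, ← Finset.sum_add_distrib]
    refine Finset.sum_congr rfl fun a _ => Finset.sum_congr rfl fun b _ => ?_
    ring
  rw [this]
  positivity

theorem core_pos {d : ℕ} (n : Fin d → ℝ) (hn : ∀ i, 0 < n i) (hn1 : ∀ i, n i < 1)
    (H Y : Matrix (Fin d) (Fin d) ℝ) (hH : (H - 1).PosSemidef)
    (hYH : Y = H - Matrix.diagonal (fun i => 2 / (1 + n i))) (hY0 : Y ≠ 0) :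
    0 < Matrix.trace (Matrix.diagonal (fun i => 1 - n i ^ 2) * Y * Matrix.diagonal (fun i => 1 + n i)
      * H * Matrix.diagonal n * Y) := by
  set U := H - 1 with hUdef
  have hUs : ∀ i j, U i j = U j i := fun i j => by
    have := hH.isHermitian.apply i j
    simpa using this.symm
  have hUY : ∀ a b, U a b = Y a b + if a = b then (1 - n a) / (1 + n a) else 0 := fun a b => by
    have := hn a
    rw [hUdef, hYH]
    by_cases h : a = b
    · subst h
      simp
      field_simp
      ring
    · simp [h]
  have hHU : ∀ a b, H a b = U a b + if a = b then 1 else 0 := fun a b => by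
    rw [hUdef]; simp [Matrix.one_apply]
  have hYs : ∀ i j, Y i j = Y j i := fun i j => by
    have h := hUs i j
    rw [hUY, hUY] at h
    by_cases e : i = j
    · rw [e]
    · simpa [e, Ne.symm e, eq_comm] using h
  have htr : Matrix.trace (Matrix.diagonal (fun i => 1 - n i ^ 2) * Y *
      Matrix.diagonal (fun i => 1 + n i) * H * Matrix.diagonal n * Y)
      = ∑ c, ∑ a, ∑ b, ((1 - n c ^ 2) * (1 + n a) * n b) * (Y c a * H a b * Y b c) := by
    simp only [Matrix.trace, Matrix.diag, Matrix.mul_apply (N := Y) (M := _ * Matrix.diagonal n),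
      Matrix.mul_diagonal]
    refine Finset.sum_congr rfl fun c _ => ?_
    rw [Finset.sum_comm]
    refine Finset.sum_congr rfl fun b _ => ?_
    simp only [Matrix.mul_apply (N := H), Matrix.mul_diagonal, Matrix.diagonal_mul, Finset.sum_mul]
    refine Finset.sum_congr rfl fun a _ => ?_
    ring
  have hcub := core_cubic n Y hYs
  have hform : 0 ≤ ∑ c, ∑ a, ∑ b, (n c - n c * (1 + n c) * (n a + n b) / 2
      + (2 - n c ^ 2) * n a * n b) * (Y c a * U a b * Y b c) := by
    refine Finset.sum_nonneg fun c _ => ?_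
    have := form_nonneg U hH (fun a => Y c a) n (n c) (hn c) (hn1 c)
    simpa only [hYs c] using this
  have hdec : ∑ c, ∑ a, ∑ b, ((1 - n c ^ 2) * (1 + n a) * n b) * (Y c a * H a b * Y b c)
      = (∑ c, ∑ a, ∑ b, (n c - n c * (1 + n c) * (n a + n b) / 2
      + (2 - n c ^ 2) * n a * n b) * (Y c a * U a b * Y b c))
      + ∑ c, ∑ a, ((1 - n c ^ 2) * (1 + n a) * n a + (1 - n a) ^ 2 * (n a - n c) / (1 + n a))
        * Y c a ^ 2 := by
    rw [← sub_eq_zero]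
    rw [← hcub]
    rw [← Finset.sum_add_distrib, ← Finset.sum_sub_distrib]
    refine Finset.sum_congr rfl fun c _ => ?_
    rw [← Finset.sum_add_distrib, ← Finset.sum_sub_distrib]
    refine Finset.sum_congr rfl fun a _ => ?_
    have : ((1 - n c ^ 2) * (1 + n a) * n a + (1 - n a) ^ 2 * (n a - n c) / (1 + n a))
        * Y c a ^ 2 = ∑ b, if a = b then ((1 - n c ^ 2) * (1 + n a) * n a
          + (1 - n a) ^ 2 * (n a - n c) / (1 + n a)) * Y c a ^ 2 else 0 := by simp
    rw [this, ← Finset.sum_add_distrib, ← Finset.sum_sub_distrib]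
    refine Finset.sum_congr rfl fun b _ => ?_
    rw [hHU, hUY]
    by_cases h : a = b
    · subst h
      have := hn a
      simp only [if_true, hYs a c]
      field_simp
      ring
    · simp only [h, if_false]
      ring
  rw [htr, hdec]
  apply add_pos_of_nonneg_of_pos hform
  set ρ : Fin d → Fin d → ℝ := fun c a =>
    ((1 - n c ^ 2) * (1 + n a) * n a + (1 - n a) ^ 2 * (n a - n c) / (1 + n a)) with hρ
  have hsw : ∑ c, ∑ a, ρ c a * Y c a ^ 2 = ∑ c, ∑ a, ρ a c * Y c a ^ 2 := by
    rw [Finset.sum_comm]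
    refine Finset.sum_congr rfl fun c _ => Finset.sum_congr rfl fun a _ => ?_
    rw [hYs]
  have hpos : ∀ c a, 0 < ρ c a + ρ a c := fun c a => rho_pos (n a) (n c) (hn a) (hn1 a) (hn c) (hn1 c)
  have : 0 < ∑ c, ∑ a, (ρ c a + ρ a c) * Y c a ^ 2 := by
    obtain ⟨i, j, hij⟩ : ∃ i j, Y i j ≠ 0 := by
      by_contra hcon
      push Not at hcon
      exact hY0 (by ext i j; simpa using hcon i j)
    refine Finset.sum_pos' (fun c _ => Finset.sum_nonneg fun a _ =>
      mul_nonneg (hpos c a).le (sq_nonneg _)) ⟨i, Finset.mem_univ _, ?_⟩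
    refine Finset.sum_pos' (fun a _ => mul_nonneg (hpos i a).le (sq_nonneg _))
      ⟨j, Finset.mem_univ _, ?_⟩
    exact mul_pos (hpos i j) (by positivity)
  simp only [add_mul, Finset.sum_add_distrib] at this
  change 0 < ∑ c, ∑ a, ρ c a * Y c a ^ 2
  linarith

open Matrix in
theorem sim_diag {d : ℕ} (K S : Matrix (Fin d) (Fin d) ℝ) (hK : K.PosDef) (hS : S.PosDef) :
    ∃ (B : Matrix (Fin d) (Fin d) ℝ) (s : Fin d → ℝ), IsUnit B.det ∧ K = B * Bᵀ ∧
      S = B * diagonal s * Bᵀ ∧ ∀ i, 0 < s i := by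
  have spec : ∀ M : Matrix (Fin d) (Fin d) ℝ, M.PosDef → ∃ (O : Matrix (Fin d) (Fin d) ℝ)
      (s : Fin d → ℝ), O * Oᵀ = 1 ∧ Oᵀ * O = 1 ∧ M = O * diagonal s * Oᵀ ∧ ∀ i, 0 < s i := by
    intro M hM
    refine ⟨hM.isHermitian.eigenvectorUnitary, hM.isHermitian.eigenvalues, ?_, ?_, ?_,
      hM.eigenvalues_pos⟩
    · have := (Matrix.mem_unitaryGroup_iff (A := (hM.isHermitian.eigenvectorUnitary :
        Matrix (Fin d) (Fin d) ℝ))).1 hM.isHermitian.eigenvectorUnitary.2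
      simpa [star_eq_conjTranspose] using this
    · have := (Matrix.mem_unitaryGroup_iff' (A := (hM.isHermitian.eigenvectorUnitary :
        Matrix (Fin d) (Fin d) ℝ))).1 hM.isHermitian.eigenvectorUnitary.2
      simpa [star_eq_conjTranspose] using this
    · have := hM.isHermitian.spectral_theorem
      rw [Unitary.conjStarAlgAut_apply] at this
      simpa [star_eq_conjTranspose, Function.comp_def] using this
  obtain ⟨O, k, hO, hO', hKO, hk⟩ := spec K hK
  set C := O * diagonal (fun i => √(k i)) with hC
  set C' := diagonal (fun i => (√(k i))⁻¹) * Oᵀ with hC'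
  have hk0 : ∀ i, √(k i) ≠ 0 := fun i => (Real.sqrt_pos.2 (hk i)).ne'
  have hCC' : C * C' = 1 := by
    rw [hC, hC', Matrix.mul_assoc, ← Matrix.mul_assoc (diagonal _), diagonal_mul_diagonal]
    simp [hk0, hO]
  have hC'C : C' * C = 1 := mul_eq_one_comm.1 hCC'
  have hKC : K = C * Cᵀ := by
    have hd : diagonal k = diagonal (fun i => √(k i)) * diagonal (fun i => √(k i)) := by
      rw [diagonal_mul_diagonal]
      simp [fun i => Real.mul_self_sqrt (hk i).le]
    rw [hKO, hC, transpose_mul, diagonal_transpose, hd]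
    simp only [Matrix.mul_assoc]
  have hR : (C' * S * C'ᵀ).PosDef := by
    have := hS.mul_mul_conjTranspose_same (B := C') (by
      intro x y hxy
      have := congrArg (fun v => v ᵥ* C) hxy
      simpa [Matrix.vecMul_vecMul, hC'C] using this)
    simpa using this
  obtain ⟨V, s, hV, hV', hRV, hs⟩ := spec _ hR
  refine ⟨C * V, s, ?_, ?_, ?_, hs⟩
  · have : (C * V) * (Vᵀ * C') = 1 := by
      rw [Matrix.mul_assoc, ← Matrix.mul_assoc V, hV, Matrix.one_mul, hCC']
    exact (Matrix.isUnit_iff_isUnit_det _).1 (IsUnit.of_mul_eq_one _ this)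
  · rw [transpose_mul, Matrix.mul_assoc, ← Matrix.mul_assoc V, hV, Matrix.one_mul, hKC]
  · have h1 : C * V * diagonal s * (C * V)ᵀ = C * (V * diagonal s * Vᵀ) * Cᵀ := by
      simp only [transpose_mul, Matrix.mul_assoc]
    have h2 : C'ᵀ * Cᵀ = 1 := by rw [← transpose_mul, hCC', transpose_one]
    rw [h1, ← hRV]
    calc S = (C * C') * S * (C'ᵀ * Cᵀ) := by rw [hCC', h2]; simp
      _ = _ := by simp only [Matrix.mul_assoc]

section
attribute [local instance] Matrix.linftyOpNormedRing Matrix.linftyOpNormedAlgebra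

theorem deriv_L {d : ℕ} (E : Matrix (Fin d) (Fin d) ℝ) (A : ℝ → Matrix (Fin d) (Fin d) ℝ)
    (A' : Matrix (Fin d) (Fin d) ℝ) (t : ℝ)
    (hA : ∀ i j, HasDerivAt (fun s => A s i j) (A' i j) t) (hu : IsUnit (A t)) :
    HasDerivAt (fun s => Matrix.trace ((E - (A s)⁻¹) ^ 2))
      (2 * Matrix.trace ((E - (A t)⁻¹) * ((A t)⁻¹ * A' * (A t)⁻¹))) t := by
  have h1 : HasDerivAt A A' t := by
    have : HasDerivAt (fun s i => A s i) (fun i => A' i) t :=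
      hasDerivAt_pi.2 fun i => hasDerivAt_pi.2 fun j => hA i j
    exact this
  obtain ⟨u, hu⟩ := hu
  have h2 := hasFDerivAt_ringInverse (𝕜 := ℝ) u
  rw [hu] at h2
  have h3 : HasDerivAt (fun s => (A s)⁻¹) (-((A t)⁻¹ * A' * (A t)⁻¹)) t := by
    have := h2.comp_hasDerivAt t h1
    have e : (fun s => (A s)⁻¹) = Ring.inverse ∘ A := by
      funext s; simp [Matrix.nonsing_inv_eq_ringInverse]
    rw [e]
    have e2 : (A t)⁻¹ = ((u⁻¹ : (Matrix (Fin d) (Fin d) ℝ)ˣ) : Matrix (Fin d) (Fin d) ℝ) := by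
      rw [Matrix.nonsing_inv_eq_ringInverse, ← hu, Ring.inverse_unit]
    refine HasDerivAt.congr_deriv (this : _) ?_
    simp [e2]
  have h4 := (h3.const_sub E)
  have h5 := h4.mul h4
  have h6 := ((Matrix.traceLinearMap (Fin d) ℝ ℝ).toContinuousLinearMap.hasFDerivAt
    (x := (E - (A t)⁻¹) * (E - (A t)⁻¹))).comp_hasDerivAt t h5
  have e7 : (fun s => Matrix.trace ((E - (A s)⁻¹) ^ 2)) =
    (Matrix.traceLinearMap (Fin d) ℝ ℝ).toContinuousLinearMap ∘
      (fun s => (E - (A s)⁻¹) * (E - (A s)⁻¹)) := by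
    funext s; simp [pow_two]
  rw [e7]
  refine HasDerivAt.congr_deriv (h6 : _) ?_
  rw [neg_neg]
  change Matrix.trace ((A t)⁻¹ * A' * (A t)⁻¹ * (E - (A t)⁻¹)
    + (E - (A t)⁻¹) * ((A t)⁻¹ * A' * (A t)⁻¹)) = _
  rw [Matrix.trace_add, Matrix.trace_mul_comm ((A t)⁻¹ * A' * (A t)⁻¹)]
  ring
end

open Matrix in
theorem trace_pos_main {d : ℕ} (K S A E : Matrix (Fin d) (Fin d) ℝ) (c : ℝ) (hc : 0 < c)
    (hE : E.PosDef) (hK : K = 1 + c • E) (hA : IsUnit A)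
    (hS : S = K * A * K - (2 * c) • K) (hSpd : S.PosDef) (hne : E - A⁻¹ ≠ 0) :
    0 < trace ((E - A⁻¹) * (A⁻¹ * (K⁻¹ * ((E - A⁻¹) * S + S * (E - A⁻¹)) * K⁻¹) * A⁻¹)) := by
  have hKpd : K.PosDef := by rw [hK]; exact PosDef.one.add (hE.smul hc)
  obtain ⟨B, s, hB, hKB, hSB, hs⟩ := sim_diag K S hKpd hSpd
  have hBt : IsUnit Bᵀ.det := by rwa [det_transpose]
  set C := B⁻¹ with hC
  have hBC : B * C = 1 := mul_nonsing_inv _ hB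
  have hCB : C * B = 1 := nonsing_inv_mul _ hB
  have hBCt : Cᵀ * Bᵀ = 1 := by rw [← transpose_mul, hBC, transpose_one]
  have hCBt : Bᵀ * Cᵀ = 1 := by rw [← transpose_mul, hCB, transpose_one]
  have hBC' : ∀ X, B * (C * X) = X := fun X => by rw [← Matrix.mul_assoc, hBC, Matrix.one_mul]
  have hCB' : ∀ X, C * (B * X) = X := fun X => by rw [← Matrix.mul_assoc, hCB, Matrix.one_mul]
  have hBCt' : ∀ X, Cᵀ * (Bᵀ * X) = X := fun X => by rw [← Matrix.mul_assoc, hBCt, Matrix.one_mul]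
  have hCBt' : ∀ X, Bᵀ * (Cᵀ * X) = X := fun X => by rw [← Matrix.mul_assoc, hCBt, Matrix.one_mul]
  have hKi : K⁻¹ = Cᵀ * C := by
    apply inv_eq_right_inv
    rw [hKB, Matrix.mul_assoc, hCBt', hBC]
  have hs2 : ∀ i, 0 < s i + 2 * c := fun i => by have := hs i; linarith
  -- the matrix A in the simultaneous basis
  have hAB : A = Cᵀ * diagonal (fun i => s i + 2 * c) * C := by
    have h1 : K * A * K = B * diagonal (fun i => s i + 2 * c) * Bᵀ := by
      have : K * A * K = S + (2 * c) • K := by rw [hS]; abel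
      rw [this, hSB, hKB]
      have : diagonal (fun i => s i + 2 * c) = diagonal s + (2 * c) • (1 : Matrix (Fin d) (Fin d) ℝ) := by
        ext i j
        by_cases h : i = j
        · subst h; simp
        · simp [h]
      rw [this]
      simp [Matrix.mul_add, Matrix.add_mul]
    calc A = Cᵀ * (C * (B * (Bᵀ * A))) := by rw [hCB', hBCt']
      _ = Cᵀ * C * (K * A * K) * (Cᵀ * C) := by
          rw [hKB]; simp only [Matrix.mul_assoc, hCBt', hBC, Matrix.mul_one]
      _ = _ := by
          rw [h1]; simp only [Matrix.mul_assoc, hCB', hCBt']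
  have hP : A⁻¹ = B * diagonal (fun i => (s i + 2 * c)⁻¹) * Bᵀ := by
    apply inv_eq_right_inv
    rw [hAB]
    have : diagonal (fun i => s i + 2 * c) * diagonal (fun i => (s i + 2 * c)⁻¹)
      = (1 : Matrix (Fin d) (Fin d) ℝ) := by
      rw [diagonal_mul_diagonal]; simp [fun i => (hs2 i).ne']
    simp only [Matrix.mul_assoc, hCB']
    rw [← Matrix.mul_assoc (diagonal _), this, Matrix.one_mul, hBCt]
  set D := E - A⁻¹ with hD
  set n : Fin d → ℝ := fun i => s i / (s i + 2 * c) with hn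
  have hn0 : ∀ i, 0 < n i := fun i => div_pos (hs i) (hs2 i)
  have hn1 : ∀ i, n i < 1 := fun i => by rw [hn]; simp only; rw [div_lt_one (hs2 i)]; linarith
  set M := diagonal (fun i => 1 + n i) with hM
  set w := diagonal (fun i => 1 - n i) with hw
  have hwP : (2 * c) • A⁻¹ = B * w * Bᵀ := by
    have : w = (2 * c) • diagonal (fun i => (s i + 2 * c)⁻¹) := by
      rw [hw, ← diagonal_smul]
      congr 1
      funext i
      have := (hs2 i).ne'
      simp only [hn, Pi.smul_apply, smul_eq_mul]
      field_simp
      ring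
    rw [hP, this]
    simp
  have hDB : (2 * c) • D = B * M * Bᵀ - (2 : ℝ) • 1 := by
    have h1 : M = (2 : ℝ) • 1 - w := by
      ext i j
      by_cases h : i = j
      · subst h; simp [hM, hw]; ring
      · simp [hM, hw, h]
    have h2 : c • E = K - 1 := by rw [hK]; abel
    rw [hD, smul_sub, hwP, mul_smul, h2, h1, hKB]
    simp only [Matrix.mul_sub, Matrix.sub_mul, smul_sub]
    simp only [Matrix.mul_smul, Matrix.smul_mul, Matrix.mul_one]
    abel
  set H := Bᵀ * B with hH
  set Y := H - diagonal (fun i => 2 / (1 + n i)) with hY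
  have hm0 : ∀ i, 1 + n i ≠ 0 := fun i => by have := hn0 i; positivity
  have hYM : Y * M = H * M - (2 : ℝ) • 1 := by
    rw [hY, hM, Matrix.sub_mul, diagonal_mul_diagonal]
    congr 1
    ext i j
    by_cases h : i = j
    · subst h; simp [hm0]
    · simp [h]
  have hBDC : Bᵀ * ((2 * c) • D) * Cᵀ = Y * M := by
    rw [hDB, hYM, Matrix.mul_sub, Matrix.sub_mul, hH]
    simp only [Matrix.mul_assoc, hCBt, Matrix.mul_one, Matrix.mul_smul, Matrix.smul_mul]
  have hDsymm : Dᵀ = D := by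
    have h1 : ((2 * c) • D)ᵀ = (2 * c) • D := by
      rw [hDB]
      simp [transpose_mul, hM, Matrix.mul_assoc]
    rw [transpose_smul] at h1
    have h2 : (2 * c) ≠ 0 := by positivity
    exact smul_right_injective _ h2 h1
  have hY0 : Y ≠ 0 := by
    intro h0
    apply hne
    have h2 : (2 * c) ≠ 0 := by positivity
    have : (2 * c) • D = 0 := by
      calc (2 * c) • D = Cᵀ * (Bᵀ * ((2 * c) • D) * Cᵀ) * Bᵀ := by
            simp only [Matrix.mul_assoc, hBCt, hBCt', Matrix.mul_one]
        _ = 0 := by rw [hBDC, h0]; simp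
    exact (smul_eq_zero.1 this).resolve_left h2
  have hH1 : (H - 1).PosSemidef := by
    have hX : (K - 1).PosSemidef := by
      have : K - 1 = c • E := by rw [hK]; abel
      rw [this]; exact (hE.smul hc).posSemidef
    have hX2 : ((K - 1) + (K - 1) ^ 2).PosSemidef := hX.add (hX.pow 2)
    have h3 := hX2.mul_mul_conjTranspose_same C
    have h4 : C * ((K - 1) + (K - 1) ^ 2) * Cᴴ = H - 1 := by
      have : (K - 1) + (K - 1) ^ 2 = K * K - K := by noncomm_ring
      rw [this, conjTranspose_eq_transpose_of_trivial, hKB, hH]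
      simp only [Matrix.mul_sub, Matrix.sub_mul, Matrix.mul_assoc, hCB', hCBt, Matrix.mul_one]
    rwa [h4] at h3
  have hcore := core_pos n hn0 hn1 H Y hH1 hY hY0
  have hKit : (K⁻¹)ᵀ = K⁻¹ := by rw [hKi]; simp
  have hPt : (A⁻¹)ᵀ = A⁻¹ := by rw [hP]; simp [Matrix.mul_assoc]
  have hSt : Sᵀ = S := by rw [hSB]; simp [Matrix.mul_assoc]
  have hT2 : trace (D * (A⁻¹ * (K⁻¹ * (D * S) * K⁻¹) * A⁻¹))
      = trace (D * (A⁻¹ * (K⁻¹ * (S * D) * K⁻¹) * A⁻¹)) := by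
    rw [← trace_transpose]
    simp only [transpose_mul, hKit, hPt, hSt, hDsymm]
    rw [trace_mul_comm]
    simp only [Matrix.mul_assoc]
  have hN : A⁻¹ * K⁻¹ * S = B * diagonal n * Bᵀ := by
    rw [hP, hKi, hSB]
    simp only [Matrix.mul_assoc, hCB', hCBt']
    rw [← Matrix.mul_assoc (diagonal _), diagonal_mul_diagonal]
    congr 3
    funext i
    simp only [hn]
    ring
  have hBDB : Bᵀ * ((2 * c) • D) * B = Y * M * H := by
    rw [← hBDC, hH]
    simp only [Matrix.mul_assoc, hBCt']
  have hMw : M * w = diagonal (fun i => 1 - n i ^ 2) := by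
    rw [hM, hw, diagonal_mul_diagonal]
    congr 1
    funext i
    ring
  have hT1 : (2 * c) ^ 3 * trace (D * (A⁻¹ * (K⁻¹ * (S * D) * K⁻¹) * A⁻¹))
      = trace (diagonal (fun i => 1 - n i ^ 2) * Y * M * H * diagonal n * Y) := by
    calc (2 * c) ^ 3 * trace (D * (A⁻¹ * (K⁻¹ * (S * D) * K⁻¹) * A⁻¹))
        = trace (((2 * c) • D) * (A⁻¹ * K⁻¹ * S) * ((2 * c) • D) * K⁻¹ * ((2 * c) • A⁻¹)) := by
          simp only [Matrix.mul_smul, Matrix.smul_mul, trace_smul, smul_eq_mul, Matrix.mul_assoc]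
          ring
      _ = trace ((((2 * c) • D) * B * diagonal n * (Bᵀ * ((2 * c) • D) * Cᵀ) * w) * Bᵀ) := by
          rw [hN, hKi, hwP]
          simp only [Matrix.mul_assoc, hCB']
      _ = trace ((Bᵀ * ((2 * c) • D) * B) * diagonal n * (Bᵀ * ((2 * c) • D) * Cᵀ) * w) := by
          rw [trace_mul_comm]
          simp only [Matrix.mul_assoc]
      _ = trace ((Y * M * H * diagonal n * Y) * (M * w)) := by
          rw [hBDB, hBDC]
          simp only [Matrix.mul_assoc]
      _ = _ := by
          rw [trace_mul_comm, hMw]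
          simp only [Matrix.mul_assoc]
  rw [← hT1] at hcore
  have hpos := pos_of_mul_pos_right hcore (by positivity)
  have hsum : D * (A⁻¹ * (K⁻¹ * (D * S + S * D) * K⁻¹) * A⁻¹)
      = D * (A⁻¹ * (K⁻¹ * (D * S) * K⁻¹) * A⁻¹) + D * (A⁻¹ * (K⁻¹ * (S * D) * K⁻¹) * A⁻¹) := by
    simp only [Matrix.mul_add, Matrix.add_mul]
  rw [hsum, trace_add, hT2]
  linarith


/-- Along the continuous-time limit of the BRWP covariance dynamics
`A'(t) = −β K⁻¹[((βΣ)⁻¹ − A(t)⁻¹)S(t) + S(t)((βΣ)⁻¹ − A(t)⁻¹)]K⁻¹` with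
`S(t) = K A(t) K − 2βT K` positive definite and `K = I + TΣ⁻¹`, the squared Frobenius norm
`L(t) = Tr(((βΣ)⁻¹ − A(t)⁻¹)²)` is a strict Lyapunov function: `L'(t) < 0` whenever
`A(t) ≠ βΣ`. -/
theorem stmt_9 (d : ℕ) (Sig : Matrix (Fin d) (Fin d) ℝ) (T β : ℝ)
    (hSigsymm : Sig.IsSymm) (hSigpd : Sig.PosDef) (hT : 0 < T) (hβ : 0 < β)
    (K : Matrix (Fin d) (Fin d) ℝ) (hK : K = 1 + T • Sig⁻¹)
    (A A' : ℝ → Matrix (Fin d) (Fin d) ℝ)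
    (hAdiff : ∀ (t : ℝ) (i j : Fin d), HasDerivAt (fun s => A s i j) (A' t i j) t)
    (hAsymm : ∀ t, (A t).IsSymm) (hApd : ∀ t, (A t).PosDef)
    (S : ℝ → Matrix (Fin d) (Fin d) ℝ)
    (hS : ∀ t, S t = K * A t * K - (2 * β * T) • K)
    (hSpd : ∀ t, (S t).PosDef)
    (hODE : ∀ t, A' t = (-β) • (K⁻¹ *
      (((β • Sig)⁻¹ - (A t)⁻¹) * S t + S t * ((β • Sig)⁻¹ - (A t)⁻¹)) * K⁻¹)) :
    ∀ t : ℝ, A t ≠ β • Sig →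
      ∃ l : ℝ, HasDerivAt (fun s => Matrix.trace (((β • Sig)⁻¹ - (A s)⁻¹) ^ 2)) l t ∧
        l < 0 := by
  intro t hne
  refine ⟨_, deriv_L _ A (A' t) t (hAdiff t) (hApd t).isUnit, ?_⟩
  have hSu : IsUnit (β • Sig) := (hSigpd.smul hβ).isUnit
  have hE : ((β • Sig)⁻¹).PosDef := (hSigpd.smul hβ).inv
  have hEinv : (β • Sig)⁻¹ = β⁻¹ • Sig⁻¹ := by
    apply Matrix.inv_eq_right_inv
    rw [Matrix.smul_mul, Matrix.mul_smul, smul_smul, mul_inv_cancel₀ hβ.ne', one_smul]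
    exact Matrix.mul_nonsing_inv _ ((Matrix.isUnit_iff_isUnit_det _).1 hSigpd.isUnit)
  have hK' : K = 1 + (β * T) • (β • Sig)⁻¹ := by
    rw [hK, hEinv, smul_smul]
    congr 2
    field_simp
  have hS' : S t = K * A t * K - (2 * (β * T)) • K := by rw [hS t, mul_assoc 2 β T]
  have hne' : (β • Sig)⁻¹ - (A t)⁻¹ ≠ 0 := by
    intro h
    apply hne
    have h1 := sub_eq_zero.1 h
    have h2 := congrArg (fun X => X⁻¹) h1
    rw [Matrix.nonsing_inv_nonsing_inv _ ((Matrix.isUnit_iff_isUnit_det _).1 hSu),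
      Matrix.nonsing_inv_nonsing_inv _ ((Matrix.isUnit_iff_isUnit_det _).1 (hApd t).isUnit)] at h2
    exact h2.symm
  have hpos := trace_pos_main K (S t) (A t) ((β • Sig)⁻¹) (β * T) (mul_pos hβ hT) hE hK'
    (hApd t).isUnit hS' (hSpd t) hne'
  rw [hODE t]
  simp only [Matrix.mul_smul, Matrix.smul_mul, Matrix.trace_smul, smul_eq_mul]
  nlinarith [mul_pos hβ hpos]
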